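/- Let θ be the linear functional on (P_4)_{17} whose value is 1 exactly on the 44 monomials x_1^{a}x_2^{b}x_3^{c}x_4^{d} with (a,b,c,d) in the list {(5,5,5,2),(5,5,6,1),(3,5,8,1),(5,3,8,1),(3,6,7,1),(5,7,4,1),(7,5,4,1),(3,9,4,1),(9,3,4,1),(3,9,3,2),(9,3,3,2),(5,9,2,1),(9,5,2,1),(5,10,1,1),(9,6,1,1),(3,11,2,1),(11,3,2,1),(5,5,3,4),(5,3,5,4),(3,5,5,4),(3,12,1,1),(11,4,1,1),(7,8,1,1),(7,7,1,2),(13,2,1,1),(14,1,1,1),(6,5,3,3),(5,3,6,3),(3,6,5,3),(6,3,3,5),(3,3,6,5),(3,6,3,5),(5,3,3,6),(3,5,3,6),(3,3,5,6),(3,3,3,8),(3,3,4,7),(3,5,2,7),(3,6,1,7),(3,3,9,2),(3,3,10,1),(5,3,7,2),(5,7,3,2),(7,5,3,2)}, and 0 on every other monomial of degree 17. Then θ vanishes on every hit polynomial of degree 17; equivalently, θ(Sq^t(g)) = 0 for every t > 0 and every g in (P_4)_{17−t}. -/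

import Mathlib

open MvPolynomial

noncomputable section

abbrev kk : Type := ZMod 2
abbrev P4 : Type := MvPolynomial (Fin 4) kk

/-- The total Steenrod square: the algebra endomorphism of `P4` with `X i ↦ X i + (X i)^2`.
For `g` homogeneous of degree `d`, `Sq^t g` is the degree-`d+t` homogeneous component
of `sqTotal g`. -/
def sqTotal : P4 →ₐ[kk] P4 := aeval fun i => X i + X i ^ 2

/-- The homogeneous polynomials of degree `n`, i.e. `(P_4)_n`, as a submodule. -/
def homog (n : ℕ) : Submodule kk P4 := homogeneousSubmodule (Fin 4) kk n

/-- The subspace `H_n` of hit polynomials of degree `n`: it is spanned by the elements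
`Sq^{n-d}(g) = (sqTotal g)_n` for `g` homogeneous of degree `d < n`, i.e. by all
`∑_{t>0} Sq^t(f_t)` with `f_t ∈ (P_4)_{n-t}`. -/
def hitSub (n : ℕ) : Submodule kk P4 :=
  Submodule.span kk
    {p | ∃ d, d < n ∧ ∃ g ∈ homog d, p = homogeneousComponent n (sqTotal g)}

/-- The exponent vector `(a, b, c, d)` of the monomial `x₁^a x₂^b x₃^c x₄^d`. -/
def ev (a b c d : ℕ) : Fin 4 →₀ ℕ := Finsupp.equivFunOnFinite.symm ![a, b, c, d]

/-- The 44 exponent vectors of the monomials on which `θ` takes the value `1`. -/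
def expList17 : List (Fin 4 →₀ ℕ) :=
  [ev 5 5 5 2, ev 5 5 6 1, ev 3 5 8 1, ev 5 3 8 1, ev 3 6 7 1, ev 5 7 4 1, ev 7 5 4 1,
   ev 3 9 4 1, ev 9 3 4 1, ev 3 9 3 2, ev 9 3 3 2, ev 5 9 2 1, ev 9 5 2 1, ev 5 10 1 1,
   ev 9 6 1 1, ev 3 11 2 1, ev 11 3 2 1, ev 5 5 3 4, ev 5 3 5 4, ev 3 5 5 4, ev 3 12 1 1,
   ev 11 4 1 1, ev 7 8 1 1, ev 7 7 1 2, ev 13 2 1 1, ev 14 1 1 1, ev 6 5 3 3, ev 5 3 6 3,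
   ev 3 6 5 3, ev 6 3 3 5, ev 3 3 6 5, ev 3 6 3 5, ev 5 3 3 6, ev 3 5 3 6, ev 3 3 5 6,
   ev 3 3 3 8, ev 3 3 4 7, ev 3 5 2 7, ev 3 6 1 7, ev 3 3 9 2, ev 3 3 10 1, ev 5 3 7 2,
   ev 5 7 3 2, ev 7 5 3 2]

def tupList17 : List (ℕ × ℕ × ℕ × ℕ) :=
  [(5, 5, 5, 2), (5, 5, 6, 1), (3, 5, 8, 1), (5, 3, 8, 1), (3, 6, 7, 1), 
   (5, 7, 4, 1), (7, 5, 4, 1), (3, 9, 4, 1), (9, 3, 4, 1), (3, 9, 3, 2), 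
   (9, 3, 3, 2), (5, 9, 2, 1), (9, 5, 2, 1), (5, 10, 1, 1), (9, 6, 1, 1), 
   (3, 11, 2, 1), (11, 3, 2, 1), (5, 5, 3, 4), (5, 3, 5, 4), (3, 5, 5, 4), 
   (3, 12, 1, 1), (11, 4, 1, 1), (7, 8, 1, 1), (7, 7, 1, 2), (13, 2, 1, 1), 
   (14, 1, 1, 1), (6, 5, 3, 3), (5, 3, 6, 3), (3, 6, 5, 3), (6, 3, 3, 5), 
   (3, 3, 6, 5), (3, 6, 3, 5), (5, 3, 3, 6), (3, 5, 3, 6), (3, 3, 5, 6), 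
   (3, 3, 3, 8), (3, 3, 4, 7), (3, 5, 2, 7), (3, 6, 1, 7), (3, 3, 9, 2), 
   (3, 3, 10, 1), (5, 3, 7, 2), (5, 7, 3, 2), (7, 5, 3, 2)]

lemma expList17_eq : expList17 = tupList17.map fun t => ev t.1 t.2.1 t.2.2.1 t.2.2.2 := rfl

/-- Parity of the coefficient of `x^k` in `(x+x^2)^n`. -/
def wt (n k : ℕ) : Bool := Nat.ble n k && Nat.beq (Nat.land n (k - n)) (k - n)

def cf (n k : ℕ) : kk := if n ≤ k then (n.choose (k - n) : kk) else 0

lemma cf_eq : ∀ n < 17, ∀ k < 17, cf n k = if wt n k then 1 else 0 := by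
  have h : ∀ n < 17, ∀ k < 17, n ≤ k → (n.choose (k - n)) % 2 = if wt n k then 1 else 0 := by
    decide +kernel
  intro n hn k hk
  unfold cf
  split_ifs with h1 h2 h2
  · have := h n hn k hk h1
    rw [if_pos h2] at this
    rw [← ZMod.natCast_mod, this]; rfl
  · have := h n hn k hk h1
    rw [if_neg h2] at this
    rw [← ZMod.natCast_mod, this]; rfl
  · simp [wt, h1] at h2
  · rfl

def flt (p : ℕ × ℕ × ℕ × ℕ → ℕ) (n : ℕ) (L : List (ℕ × ℕ × ℕ × ℕ)) :=
  L.filter fun t => wt n (p t)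

lemma main_check : ∀ a < 17, ∀ b < 17 - a, ∀ c < 17 - a - b, ∀ d < 17 - a - b - c,
    (flt (fun t => t.2.2.2) d (flt (fun t => t.2.2.1) c (flt (fun t => t.2.1) b
      (flt (fun t => t.1) a tupList17)))).length % 2 = 0 := by
  decide +kernel

lemma sum_filter (L : List (ℕ × ℕ × ℕ × ℕ)) (p : ℕ × ℕ × ℕ × ℕ → ℕ) (n : ℕ)
    (hn : n < 17) (hp : ∀ t ∈ L, p t < 17) (f : ℕ × ℕ × ℕ × ℕ → kk) :
    (L.map fun t => cf n (p t) * f t).sum = ((flt p n L).map f).sum := by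
  induction L with
  | nil => rfl
  | cons t L ih =>
    have ih' := ih fun s hs => hp s (List.mem_cons_of_mem _ hs)
    have ht := cf_eq n hn (p t) (hp t List.mem_cons_self)
    unfold flt at ih' ⊢
    rw [List.map_cons, List.sum_cons, ih', List.filter_cons, ht]
    split_ifs <;> simp

lemma sum_cf (a b c d : ℕ) (h : a + b + c + d < 17) :
    (tupList17.map fun t => cf a t.1 * (cf b t.2.1 * (cf c t.2.2.1 * cf d t.2.2.2))).sum = 0 := by
  have hb : ∀ t ∈ tupList17, t.1 < 17 ∧ t.2.1 < 17 ∧ t.2.2.1 < 17 ∧ t.2.2.2 < 17 := by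
    decide +kernel
  have hs : ∀ (p : ℕ × ℕ × ℕ × ℕ → ℕ) n L, ∀ t ∈ flt p n L, t ∈ L := by
    intro p n L t ht
    exact List.mem_of_mem_filter ht
  rw [sum_filter _ (fun t => t.1) a (by omega) (fun t ht => (hb t ht).1)]
  rw [sum_filter _ (fun t => t.2.1) b (by omega) (fun t ht => (hb t (hs _ _ _ _ ht)).2.1)]
  rw [sum_filter _ (fun t => t.2.2.1) c (by omega)
    (fun t ht => (hb t (hs _ _ _ _ (hs _ _ _ _ ht))).2.2.1)]
  have e : (fun t : ℕ × ℕ × ℕ × ℕ => cf d t.2.2.2) = fun t => cf d t.2.2.2 * 1 :=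
    funext fun t => (mul_one _).symm
  rw [e]
  rw [sum_filter _ (fun t => t.2.2.2) d (by omega)
    (fun t ht => (hb t (hs _ _ _ _ (hs _ _ _ _ (hs _ _ _ _ ht)))).2.2.2)]
  rw [List.map_const', List.sum_replicate, nsmul_one, ← ZMod.natCast_mod,
    main_check a (by omega) b (by omega) c (by omega) d (by omega)]
  rfl

lemma pow_expand (i : Fin 4) (n : ℕ) :
    ((X i + X i ^ 2 : P4)) ^ n = ∑ k ∈ Finset.range (2 * n + 1), C (cf n k) * X i ^ k := by
  have h1 : ((X i + X i ^ 2 : P4)) ^ n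
      = ∑ j ∈ Finset.range (n + 1), C (cf n (n + j)) * X i ^ (n + j) := by
    rw [show (X i + X i ^ 2 : P4) = X i * (X i + 1) by ring, mul_pow, add_pow, Finset.mul_sum]
    refine Finset.sum_congr rfl fun j _ => ?_
    simp [cf, pow_add]
    ring
  have h2 : ∑ k ∈ Finset.range n, (C (cf n k) * X i ^ k : P4) = 0 := by
    refine Finset.sum_eq_zero fun k hk => ?_
    have hk' : ¬ n ≤ k := by simpa using hk
    rw [cf, if_neg hk', C_0, zero_mul]
  have h3 := Finset.sum_range_add (fun k => (C (cf n k) * X i ^ k : P4)) n (n + 1)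
  rw [h2, zero_add, ← h1] at h3
  rw [← h3, show 2 * n + 1 = n + (n + 1) by ring]

lemma coeff_sq (m e : Fin 4 →₀ ℕ) :
    coeff e (sqTotal (monomial m 1)) = ∏ i, cf (m i) (e i) := by
  unfold sqTotal
  rw [aeval_monomial, map_one, one_mul, Finsupp.prod_fintype _ _ (fun _ => pow_zero _)]
  simp only [pow_expand]
  rw [Finset.prod_univ_sum, coeff_sum]
  have h : ∀ p : Fin 4 → ℕ, (∏ i, C (cf (m i) (p i)) * X i ^ (p i) : P4)
      = monomial (Finsupp.equivFunOnFinite.symm p) (∏ i, cf (m i) (p i)) := by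
    intro p
    rw [monomial_eq, Finset.prod_mul_distrib, map_prod,
      Finsupp.prod_fintype _ _ (fun _ => pow_zero _)]
    rfl
  simp only [h, coeff_monomial]
  rw [Finset.sum_eq_single (e : Fin 4 → ℕ)]
  · rw [if_pos]
    ext i; rfl
  · intro p _ hp
    rw [if_neg]
    rintro rfl
    exact hp rfl
  · intro he
    rw [if_pos (by ext i; rfl)]
    simp only [Fintype.mem_piFinset, not_forall, Finset.mem_range] at he
    obtain ⟨i, hi⟩ := he
    refine Finset.prod_eq_zero (Finset.mem_univ i) ?_
    unfold cf
    split_ifs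
    · rw [Nat.choose_eq_zero_of_lt (by omega), Nat.cast_zero]
    · rfl

lemma theta_monomial (m : Fin 4 →₀ ℕ) (hm : m.degree < 17) :
    (expList17.map fun d => coeff d (sqTotal (monomial m 1))).sum = 0 := by
  have h := sum_cf (m 0) (m 1) (m 2) (m 3) (by
    rw [Finsupp.degree_eq_sum, Fin.sum_univ_four] at hm; exact hm)
  rw [← h, expList17_eq, List.map_map]
  congr 1
  refine List.map_congr_left fun t _ => ?_
  simp only [Function.comp, coeff_sq, Fin.prod_univ_four, mul_assoc]
  rfl

def theta : P4 →ₗ[kk] kk := (expList17.map fun d => lcoeff kk d).sum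

lemma theta_apply (f : P4) : theta f = (expList17.map fun d => coeff d f).sum := by
  unfold theta
  generalize expList17 = L
  induction L with
  | nil => rfl
  | cons a L ih => simp only [List.map_cons, List.sum_cons, LinearMap.add_apply, ih]; rfl

lemma deg_mem : ∀ e ∈ expList17, e.degree = 17 := by
  rw [expList17_eq]
  intro e he
  obtain ⟨t, ht, rfl⟩ := List.mem_map.1 he
  have : ∀ t ∈ tupList17, t.1 + t.2.1 + t.2.2.1 + t.2.2.2 = 17 := by decide +kernel
  rw [Finsupp.degree_eq_sum, Fin.sum_univ_four]
  exact this t ht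

/-- The linear functional on `(P_4)_17` taking the value `1` exactly on the 44 listed
monomials vanishes on every hit polynomial of degree `17`. -/
theorem statement_17 :
    ∀ f ∈ hitSub 17, (expList17.map fun d => coeff d f).sum = 0 := by
  intro f hf
  rw [← theta_apply]
  suffices h : hitSub 17 ≤ LinearMap.ker theta from h hf
  refine Submodule.span_le.2 ?_
  rintro p ⟨d, hd, g, hg, rfl⟩
  show theta _ = 0
  have h1 : theta (homogeneousComponent 17 (sqTotal g)) = theta (sqTotal g) := by
    rw [theta_apply, theta_apply]
    congr 1
    refine List.map_congr_left fun e he => ?_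
    rw [coeff_homogeneousComponent, if_pos (deg_mem e he)]
  rw [h1, g.as_sum, map_sum, map_sum]
  refine Finset.sum_eq_zero fun m hm => ?_
  have hdeg : m.degree = d := by
    have hg' : g.IsHomogeneous d := hg
    rw [Finsupp.degree_eq_weight_one]
    exact hg' (mem_support_iff.1 hm)
  have h2 : (monomial m (coeff m g) : P4) = coeff m g • monomial m 1 := by
    rw [smul_monomial, smul_eq_mul, mul_one]
  rw [h2, map_smul, map_smul, theta_apply, theta_monomial m (by omega), smul_zero]

end
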